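/- Let f ∈ ℂ[x,y,z,w] be a reduced homogeneous polynomial of degree d defining a surface D: f = 0 in P³, tame with respect to the pair ρ1, ρ2 of degrees e1 ≤ e2, and set e3 = d − 1 − e1 − e2 with e3 ≥ e2. Then every homogeneous syzygy ρ ∈ AR(f) of degree k < e3 belongs to S·ρ1 + S·ρ2; consequently, for every k with 0 ≤ k < e3 one has ar(f)_k = binom(k−e1+3,3) + binom(k−e2+3,3), where binom(m,3) = 0 for m < 3. -/

import Mathlib

open MvPolynomial Matrix

noncomputable section

/-- The polynomial ring `S = ℂ[x,y,z,w]`. -/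
abbrev S4 : Type := MvPolynomial (Fin 4) ℂ

/-- The `S`-linear map sending `ρ = (α,β,γ,δ)` to `α fₓ + β f_y + γ f_z + δ f_w`. -/
def jacPair (f : S4) : (Fin 4 → S4) →ₗ[S4] S4 where
  toFun ρ := ∑ i, ρ i * pderiv i f
  map_add' a b := by simp [add_mul, Finset.sum_add_distrib]
  map_smul' c a := by simp [Finset.mul_sum, mul_assoc]

/-- `AR(f)`: the `S`-module of all Jacobian syzygies of `f`. -/
def AR4 (f : S4) : Submodule S4 (Fin 4 → S4) := LinearMap.ker (jacPair f)

/-- A vector of polynomials is homogeneous of degree `q` if each component is. -/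
def VecHomog (ρ : Fin 4 → S4) (q : ℕ) : Prop := ∀ i, (ρ i).IsHomogeneous q

/-- `AR(f)_k`, the degree-`k` homogeneous part of `AR(f)`, as a `ℂ`-subspace. -/
def ARgr (f : S4) (k : ℕ) : Submodule ℂ (Fin 4 → S4) :=
  (AR4 f).restrictScalars ℂ ⊓ Submodule.pi Set.univ (fun _ => homogeneousSubmodule (Fin 4) ℂ k)

/-- `ar(f)_k = dim_ℂ AR(f)_k`. -/
def arDim (f : S4) (k : ℕ) : ℕ := Module.finrank ℂ (ARgr f k)

/-- `ar(f)_q` for an integer index, with the convention that it vanishes for `q < 0`. -/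
def arZ (f : S4) (q : ℤ) : ℕ := if 0 ≤ q then arDim f q.toNat else 0

/-- The Jacobian ideal of `f`. -/
def JacIdeal (f : S4) : Ideal S4 := Ideal.span (Set.range fun i : Fin 4 => pderiv i f)

/-- `m(f)_k = dim_ℂ M(f)_k`, the dimension of the degree-`k` part of the Milnor algebra. -/
def milnor4 (f : S4) (k : ℕ) : ℕ :=
  Module.finrank ℂ ((homogeneousSubmodule (Fin 4) ℂ k).map
    (Submodule.mkQ ((JacIdeal f).restrictScalars ℂ)))

/-- `binom(m,3)` with the convention that it is `0` for `m < 3`. -/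
def binom3 (m : ℤ) : ℕ := m.toNat.choose 3

/-- All four `3×3` minors of the `3×4` matrix with rows `ρ1, ρ2, ρ` vanish. -/
def MinorsVanish3 (ρ1 ρ2 ρ : Fin 4 → S4) : Prop :=
  ∀ j : Fin 4,
    (Matrix.of fun i k => ![ρ1, ρ2, ρ] i (j.succAbove k) : Matrix (Fin 3) (Fin 3) S4).det = 0

/-- `D : f = 0` is tame with respect to `ρ1, ρ2`: every homogeneous syzygy `ρ` for which all
`3×3` minors of the matrix with rows `ρ1, ρ2, ρ` vanish lies in `S·ρ1 + S·ρ2`. -/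
def TamePair (f : S4) (ρ1 ρ2 : Fin 4 → S4) : Prop :=
  ∀ ρ ∈ AR4 f, ∀ q : ℕ, VecHomog ρ q → MinorsVanish3 ρ1 ρ2 ρ →
    ∃ a b : S4, ρ = a • ρ1 + b • ρ2

/-- `ρ1` is a nonzero homogeneous syzygy of minimal degree `e1`, and `ρ2` is a homogeneous
syzygy of minimal degree `e2 ≥ e1` among the homogeneous syzygies not in `S·ρ1`. -/
def MinimalPair (f : S4) (ρ1 ρ2 : Fin 4 → S4) (e1 e2 : ℕ) : Prop :=
  ρ1 ∈ AR4 f ∧ ρ1 ≠ 0 ∧ VecHomog ρ1 e1 ∧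
  (∀ ρ ∈ AR4 f, ∀ q : ℕ, ρ ≠ 0 → VecHomog ρ q → e1 ≤ q) ∧
  ρ2 ∈ AR4 f ∧ VecHomog ρ2 e2 ∧ e1 ≤ e2 ∧ (∀ a : S4, ρ2 ≠ a • ρ1) ∧
  (∀ ρ ∈ AR4 f, ∀ q : ℕ, VecHomog ρ q → (∀ a : S4, ρ ≠ a • ρ1) → e2 ≤ q)

/-- `D : f = 0` is a free surface with exponents `d1 ≤ d2 ≤ d3`: `AR(f)` is a free graded
`S`-module with a homogeneous basis of degrees `d1, d2, d3`. -/
def IsFreeWith (f : S4) (d1 d2 d3 : ℕ) : Prop :=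
  d1 ≤ d2 ∧ d2 ≤ d3 ∧
  ∃ ρ1 ρ2 ρ3 : Fin 4 → S4,
    ρ1 ∈ AR4 f ∧ ρ2 ∈ AR4 f ∧ ρ3 ∈ AR4 f ∧
    VecHomog ρ1 d1 ∧ VecHomog ρ2 d2 ∧ VecHomog ρ3 d3 ∧
    (∀ ρ ∈ AR4 f, ∃ a b c : S4, ρ = a • ρ1 + b • ρ2 + c • ρ3) ∧
    (∀ a b c : S4, a • ρ1 + b • ρ2 + c • ρ3 = 0 → a = 0 ∧ b = 0 ∧ c = 0)

/-- `D : f = 0` is a nearly free surface with exponents `d1 ≤ d2 ≤ d3` (`d4 = d3`):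
`AR(f)` is generated by four homogeneous syzygies of degrees `d1, d2, d3, d3`,
with `d3 = d - (d1 + d2)`, whose module of relations is generated by a single relation
`a₁ρ₁ + a₂ρ₂ + a₃ρ₃ + a₄ρ₄ = 0` with `a₁, a₂, a₃, a₄` homogeneous of degrees
`d3-d1+1, d3-d2+1, 1, 1`. -/
def IsNearlyFreeWith (f : S4) (d d1 d2 d3 : ℕ) : Prop :=
  d1 ≤ d2 ∧ d2 ≤ d3 ∧ d1 + d2 + d3 = d ∧
  ∃ (ρ : Fin 4 → Fin 4 → S4) (a : Fin 4 → S4),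
    (∀ i, ρ i ∈ AR4 f) ∧
    VecHomog (ρ 0) d1 ∧ VecHomog (ρ 1) d2 ∧ VecHomog (ρ 2) d3 ∧ VecHomog (ρ 3) d3 ∧
    (∀ σ ∈ AR4 f, ∃ b : Fin 4 → S4, σ = ∑ i, b i • ρ i) ∧
    (a 0).IsHomogeneous (d3 - d1 + 1) ∧ (a 1).IsHomogeneous (d3 - d2 + 1) ∧
    (a 2).IsHomogeneous 1 ∧ (a 3).IsHomogeneous 1 ∧
    a ≠ 0 ∧ (∑ i, a i • ρ i) = 0 ∧
    (∀ b : Fin 4 → S4, (∑ i, b i • ρ i) = 0 → ∃ c : S4, b = c • a)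

/-- `D : f = 0` is tame: it is tame with respect to some pair `ρ1, ρ2` chosen as in the paper. -/
def IsTame (f : S4) : Prop :=
  ∃ (ρ1 ρ2 : Fin 4 → S4) (e1 e2 : ℕ), MinimalPair f ρ1 ρ2 e1 e2 ∧ TamePair f ρ1 ρ2

/-- The `4×4` matrix with rows the Euler vector field `(x,y,z,w)` and `ρ1, ρ2, ρ`. -/
def EMat (ρ1 ρ2 ρ : Fin 4 → S4) : Matrix (Fin 4) (Fin 4) S4 :=
  Matrix.of ![fun i => X i, ρ1, ρ2, ρ]

/-!
Let `M` be the square matrix whose rows are the Euler field `(x, y, z, w)` and the syzygies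
`ρ1`, `ρ2`, `ρ`. By Euler's identity it sends the gradient of `f` to `(d f, 0, 0, 0)`, so Cramer's
rule expresses each `det M * ∂ⱼf` as `d f` times a `3 × 3` minor, up to sign, of the last three
rows. In characteristic zero no prime factor of a squarefree `f` divides all partial derivatives,
hence `f ∣ det M`. As `det M` has degree `1 + e1 + e2 + k < d`, it vanishes, then so do the minors,
and tameness applies. By minimality of `e1` the entries of `ρ1` have no common factor, so `ρ1` and
`ρ2` are linearly independent, and the dimension in degree `k` is therefore that of the free
graded module `S(-e1) ⊕ S(-e2)`.
-/

section Derivatives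

variable {σ R K : Type*} [Field K]

lemma totalDegree_pderiv_lt [CommSemiring R] {p : MvPolynomial σ R} {i : σ}
    (h : pderiv i p ≠ 0) : (pderiv i p).totalDegree < p.totalDegree := by
  obtain ⟨m, hm, hdeg⟩ := Finset.exists_mem_eq_sup _ (support_nonempty.mpr h) Finsupp.degree
  have hm' : m + Finsupp.single i 1 ∈ p.support := by
    rw [mem_support_iff, coeff_pderiv] at hm
    exact mem_support_iff.mpr (left_ne_zero_of_mul hm)
  calc (pderiv i p).totalDegree = m.degree := hdeg
    _ < (m + Finsupp.single i 1).degree := by simp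
    _ ≤ p.totalDegree := le_totalDegree hm'

lemma pderiv_eq_zero_of_dvd [CommRing R] [IsDomain R] {p : MvPolynomial σ R} {i : σ}
    (h : p ∣ pderiv i p) : pderiv i p = 0 := by
  by_contra h0
  exact (totalDegree_pderiv_lt h0).not_ge (totalDegree_le_of_dvd_of_isDomain h h0)

lemma totalDegree_eq_zero_of_forall_pderiv_eq_zero [CommRing R] [NoZeroDivisors R] [CharZero R]
    {p : MvPolynomial σ R} (h : ∀ i, pderiv i p = 0) : p.totalDegree = 0 := by
  refine (totalDegree_eq_zero_iff _ p).mpr fun m hm i => by_contra fun hi => ?_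
  have hcoeff := coeff_pderiv (i := i) p (m - Finsupp.single i 1)
  rw [h i, coeff_zero, Finsupp.sub_add_single_one_cancel hi] at hcoeff
  exact mul_ne_zero (mem_support_iff.mp hm) (Nat.cast_add_one_ne_zero _) hcoeff.symm

lemma isUnit_of_totalDegree_eq_zero {p : MvPolynomial σ K} (hp : p ≠ 0)
    (hdeg : p.totalDegree = 0) : IsUnit p := by
  rw [totalDegree_eq_zero_iff_eq_C] at hdeg
  rw [hdeg, Ne, C_eq_zero] at hp
  rw [hdeg]
  exact (IsUnit.mk0 _ hp).map C

lemma exists_not_dvd_pderiv_of_irreducible [CharZero K] {p : MvPolynomial σ K}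
    (hp : Irreducible p) : ∃ i, ¬ p ∣ pderiv i p := by
  by_contra! h
  exact hp.not_isUnit <| isUnit_of_totalDegree_eq_zero hp.ne_zero <|
    totalDegree_eq_zero_of_forall_pderiv_eq_zero fun i => pderiv_eq_zero_of_dvd (h i)

lemma exists_not_dvd_pderiv_of_squarefree [CharZero K] {f p : MvPolynomial σ K}
    (hf : Squarefree f) (hp : Irreducible p) (hpf : p ∣ f) : ∃ i, ¬ p ∣ pderiv i f := by
  obtain ⟨q, rfl⟩ := hpf
  obtain ⟨i, hi⟩ := exists_not_dvd_pderiv_of_irreducible hp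
  have hpq : ¬ p ∣ q := fun h => hp.not_isUnit (hf p (mul_dvd_mul_left p h))
  refine ⟨i, fun h => ?_⟩
  rw [pderiv_mul, dvd_add_left (dvd_mul_right p _)] at h
  exact (hp.prime.dvd_or_dvd h).elim hi hpq

lemma dvd_of_squarefree_of_forall_prime_dvd [CommRing R] [IsDomain R]
    [UniqueFactorizationMonoid R] {f g : R} (hf : Squarefree f)
    (h : ∀ p, Prime p → p ∣ f → p ∣ g) : f ∣ g := by
  obtain ⟨f', g', c, hcoprime, rfl, rfl⟩ :=
    UniqueFactorizationMonoid.exists_reduced_factors f hf.ne_zero g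
  suffices hu : IsUnit f' from mul_dvd_mul_left c hu.dvd
  by_contra hu
  obtain ⟨p, hp, hpf'⟩ :=
    WfDvdMonoid.exists_irreducible_factor hu (right_ne_zero_of_mul hf.ne_zero)
  rcases hp.prime.dvd_or_dvd (h p hp.prime (hpf'.mul_left c)) with hpc | hpg'
  · exact hp.not_isUnit (hf p (mul_dvd_mul hpc hpf'))
  · exact hp.not_isUnit (hcoprime hpf' hpg')

lemma dvd_of_squarefree_of_forall_dvd_mul_pderiv [CharZero K] {f g : MvPolynomial σ K}
    (hf : Squarefree f) (h : ∀ i, f ∣ g * pderiv i f) : f ∣ g := by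
  refine dvd_of_squarefree_of_forall_prime_dvd hf fun p hp hpf => ?_
  obtain ⟨i, hi⟩ := exists_not_dvd_pderiv_of_squarefree hf hp.irreducible hpf
  exact (hp.dvd_or_dvd (hpf.trans (h i))).resolve_right hi

lemma linearIndependent_pair_of_forall_dvd_isUnit {τ : Type*} [CommRing R] [IsDomain R]
    [UniqueFactorizationMonoid R] {x y : τ → R} (hx : ∀ b, (∀ i, b ∣ x i) → IsUnit b)
    (hy : ∀ a : R, y ≠ a • x) : LinearIndependent R ![x, y] := by
  have hx0 : x ≠ 0 := by
    rintro rfl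
    exact not_isUnit_zero (hx 0 fun _ => dvd_rfl)
  refine LinearIndependent.pair_iff.mpr fun a b hab => ?_
  suffices hb : b = 0 by
    rw [hb, zero_smul, add_zero] at hab
    exact ⟨(smul_eq_zero.mp hab).resolve_right hx0, hb⟩
  by_contra hb
  obtain ⟨b', a', c, hcoprime, rfl, rfl⟩ := UniqueFactorizationMonoid.exists_reduced_factors b hb a
  have hzero : a' • x + b' • y = 0 := by
    rw [mul_smul, mul_smul, ← smul_add] at hab
    exact (smul_eq_zero.mp hab).resolve_left (left_ne_zero_of_mul hb)
  have hdvd (i : τ) : b' ∣ x i :=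
    hcoprime.dvd_of_dvd_mul_left ⟨-y i, by
      have := congrFun hzero i
      simp only [Pi.add_apply, Pi.smul_apply, smul_eq_mul, Pi.zero_apply] at this
      linear_combination this⟩
  obtain ⟨u, rfl⟩ := hx b' hdvd
  refine hy (-(↑u⁻¹ * a')) ?_
  rw [neg_smul, mul_smul, eq_neg_of_add_eq_zero_left hzero, smul_neg, neg_neg, smul_smul,
    Units.inv_mul, one_smul]

end Derivatives

section HomogeneousVectors

variable {σ τ ι R K : Type*} [CommRing R] [Field K]

attribute [local instance] MvPolynomial.gradedAlgebra

lemma homogeneousComponent_mul_of_isHomogeneous (a : MvPolynomial σ R) {h : MvPolynomial σ R}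
    {e : ℕ} (hh : h.IsHomogeneous e) (k : ℕ) :
    homogeneousComponent k (a * h) =
      (if e ≤ k then homogeneousComponent (k - e) a else 0) * h := by
  have key := DirectSum.coe_decompose_mul_of_right_mem (homogeneousSubmodule σ R) (a := a) k hh
  rw [ite_mul, zero_mul]
  simp only [← decomposition.decompose'_apply]
  exact key

/-- The degree-`k` part of the free graded module of vectors of polynomials indexed by `τ`. -/
def homogeneousVectors (k : ℕ) : Submodule R (τ → MvPolynomial σ R) :=
  Submodule.pi Set.univ fun _ => homogeneousSubmodule σ R k

lemma mem_homogeneousVectors {k : ℕ} {v : τ → MvPolynomial σ R} :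
    v ∈ homogeneousVectors k ↔ ∀ i, (v i).IsHomogeneous k := by
  simp [homogeneousVectors]

variable (σ R) in
/-- The degree-`k` part of the shifted graded module `S(-e)`, where `S = R[σ]`: it consists of the
coefficients `a` for which `a • v` has degree `k` when `v` has degree `e`. -/
def shiftedHomogeneousSubmodule (e k : ℕ) : Submodule R (MvPolynomial σ R) :=
  if e ≤ k then homogeneousSubmodule σ R (k - e) else ⊥

lemma smul_mem_homogeneousVectors {e k : ℕ} {a : MvPolynomial σ R} {v : τ → MvPolynomial σ R}
    (ha : a ∈ shiftedHomogeneousSubmodule σ R e k) (hv : v ∈ homogeneousVectors e) :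
    a • v ∈ homogeneousVectors k := by
  rw [shiftedHomogeneousSubmodule] at ha
  split_ifs at ha with hek
  · refine mem_homogeneousVectors.mpr fun i => ?_
    simpa [Nat.sub_add_cancel hek] using IsHomogeneous.mul ha (mem_homogeneousVectors.mp hv i)
  · rw [(Submodule.mem_bot R).mp ha, zero_smul]
    exact zero_mem _

lemma exists_mem_shiftedHomogeneousSubmodule_homogeneousComponent_mul (a : MvPolynomial σ R)
    (e k : ℕ) : ∃ a' ∈ shiftedHomogeneousSubmodule σ R e k,
      ∀ h : MvPolynomial σ R, h.IsHomogeneous e → homogeneousComponent k (a * h) = a' * h := by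
  refine ⟨_, ?_, fun h hh => homogeneousComponent_mul_of_isHomogeneous a hh k⟩
  rw [shiftedHomogeneousSubmodule]
  split_ifs
  · exact homogeneousComponent_mem _ _
  · exact zero_mem _

lemma finrank_homogeneousSubmodule [Fintype σ] [Nontrivial R] (n : ℕ) :
    Module.finrank R (homogeneousSubmodule σ R n) = (Fintype.card σ).multichoose n := by
  classical
  have hset : {m : σ →₀ ℕ | m.degree = n} = (Finset.univ : Finset σ).finsuppAntidiag n := by
    ext m
    simp [Finsupp.degree_eq_sum]
  rw [homogeneousSubmodule_eq_finsupp_supported]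
  refine (Module.finrank_eq_nat_card_basis (basisRestrictSupport R _)).trans ?_
  rw [hset, Nat.card_coe_set_eq, Set.ncard_coe_finset,
    Finset.card_finsuppAntidiag_nat_eq_multichoose, Finset.card_univ]

lemma finrank_shiftedHomogeneousSubmodule [Fintype σ] [Nontrivial R] (e k : ℕ) :
    Module.finrank R (shiftedHomogeneousSubmodule σ R e k) =
      if e ≤ k then (Fintype.card σ).multichoose (k - e) else 0 := by
  rw [shiftedHomogeneousSubmodule]
  by_cases hek : e ≤ k
  · rw [if_pos hek, if_pos hek, finrank_homogeneousSubmodule]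
  · rw [if_neg hek, if_neg hek, finrank_bot]

instance [Finite σ] (e k : ℕ) : Module.Finite R (shiftedHomogeneousSubmodule σ R e k) := by
  rw [shiftedHomogeneousSubmodule]
  by_cases hek : e ≤ k
  · rw [if_pos hek]
    exact Module.Finite.iff_fg.mpr (homogeneousSubmodule_fg σ R _)
  · rw [if_neg hek]
    infer_instance

variable [Fintype ι]

lemma mem_span_range_inf_homogeneousVectors_iff {v : ι → τ → MvPolynomial σ R} {e : ι → ℕ}
    (hv : ∀ j, v j ∈ homogeneousVectors (e j)) {k : ℕ} {u : τ → MvPolynomial σ R} :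
    u ∈ (Submodule.span (MvPolynomial σ R) (Set.range v)).restrictScalars R ⊓
        homogeneousVectors k ↔
      ∃ c : ∀ j, shiftedHomogeneousSubmodule σ R (e j) k,
        ∑ j, (c j : MvPolynomial σ R) • v j = u := by
  constructor
  · rintro ⟨hspan, hu⟩
    obtain ⟨a, rfl⟩ := (Submodule.mem_span_range_iff_exists_fun _).mp hspan
    choose a' ha' hmul using fun j =>
      exists_mem_shiftedHomogeneousSubmodule_homogeneousComponent_mul (a j) (e j) k
    refine ⟨fun j => ⟨a' j, ha' j⟩, funext fun i => ?_⟩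
    rw [← homogeneousComponent_eq_self (mem_homogeneousVectors.mp hu i)]
    simp only [Finset.sum_apply, Pi.smul_apply, smul_eq_mul, map_sum]
    exact Finset.sum_congr rfl fun j _ => (hmul j _ (mem_homogeneousVectors.mp (hv j) i)).symm
  · rintro ⟨c, rfl⟩
    exact ⟨Submodule.sum_mem _ fun j _ =>
        Submodule.smul_mem _ _ (Submodule.subset_span (Set.mem_range_self j)),
      Submodule.sum_mem _ fun j _ => smul_mem_homogeneousVectors (c j).2 (hv j)⟩

lemma finrank_span_range_inf_homogeneousVectors [Fintype σ] {v : ι → τ → MvPolynomial σ K}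
    {e : ι → ℕ} (hli : LinearIndependent (MvPolynomial σ K) v)
    (hv : ∀ j, v j ∈ homogeneousVectors (e j)) (k : ℕ) :
    Module.finrank K ↥((Submodule.span (MvPolynomial σ K) (Set.range v)).restrictScalars K ⊓
        homogeneousVectors k) =
      ∑ j, if e j ≤ k then (Fintype.card σ).multichoose (k - e j) else 0 := by
  let combination : (∀ j, shiftedHomogeneousSubmodule σ K (e j) k) →ₗ[K] τ → MvPolynomial σ K :=
    (Fintype.linearCombination (MvPolynomial σ K) v).restrictScalars K ∘ₗ
      LinearMap.piMap fun j => (shiftedHomogeneousSubmodule σ K (e j) k).subtype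
  have hinj : Function.Injective combination :=
    hli.fintypeLinearCombination_injective.comp
      (Function.Injective.piMap fun _ => Subtype.val_injective)
  have hrange : combination.range =
      (Submodule.span (MvPolynomial σ K) (Set.range v)).restrictScalars K ⊓
        homogeneousVectors k :=
    Submodule.ext fun _ => (mem_span_range_inf_homogeneousVectors_iff hv).symm
  rw [← hrange, LinearMap.finrank_range_of_inj hinj, Module.finrank_pi_fintype]
  simp only [finrank_shiftedHomogeneousSubmodule]

end HomogeneousVectors

section Determinants

variable {n R σ : Type*} [Fintype n] [DecidableEq n] [CommRing R]

lemma det_mul_eq_adjugate_mul_of_mulVec_eq_single {M : Matrix n n R} {v : n → R} {i : n} {c : R}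
    (h : M *ᵥ v = Pi.single i c) (j : n) : M.det * v j = M.adjugate j i * c := by
  simpa [adjugate_mul, smul_mulVec] using congrFun (congrArg (M.adjugate *ᵥ ·) h) j

lemma det_isHomogeneous {M : Matrix n n (MvPolynomial σ R)} {e : n → ℕ}
    (hM : ∀ i j, (M i j).IsHomogeneous (e i)) : M.det.IsHomogeneous (∑ i, e i) := by
  rw [det_apply]
  refine IsHomogeneous.sum _ _ _ fun s _ => ?_
  have hprod : (∏ i, M (s i) i).IsHomogeneous (∑ i, e i) := by
    rw [← Equiv.sum_comp s e]
    exact IsHomogeneous.prod _ _ _ fun i _ => hM (s i) i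
  exact (homogeneousSubmodule σ R (∑ i, e i)).smul_of_tower_mem _ hprod

end Determinants

section Syzygies

variable {σ R K : Type*} [Fintype σ] [CommRing R] [Field K]

/-- The module `AR(f)` of Jacobian syzygies `∑ i, ρ i * ∂f/∂xᵢ = 0` of a polynomial `f` in
arbitrarily many variables. -/
def jacobianSyzygies (f : MvPolynomial σ R) :
    Submodule (MvPolynomial σ R) (σ → MvPolynomial σ R) :=
  LinearMap.ker (Fintype.linearCombination (MvPolynomial σ R) fun i => pderiv i f)

lemma mem_jacobianSyzygies {f : MvPolynomial σ R} {ρ : σ → MvPolynomial σ R} :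
    ρ ∈ jacobianSyzygies f ↔ ∑ i, ρ i * pderiv i f = 0 :=
  Iff.rfl

lemma mem_jacobianSyzygies_of_smul_mem [IsDomain R] {f b : MvPolynomial σ R}
    {ρ : σ → MvPolynomial σ R} (hb : b ≠ 0) (h : b • ρ ∈ jacobianSyzygies f) :
    ρ ∈ jacobianSyzygies f := by
  rw [jacobianSyzygies, LinearMap.mem_ker, map_smul] at h
  exact (smul_eq_zero.mp h).resolve_left hb

lemma homogeneousComponent_mem_jacobianSyzygies {f : MvPolynomial σ R} {d : ℕ}
    (hf : f.IsHomogeneous d) {ρ : σ → MvPolynomial σ R} (hρ : ρ ∈ jacobianSyzygies f) (q : ℕ) :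
    (fun i => homogeneousComponent q (ρ i)) ∈ jacobianSyzygies f := by
  have hcomp := congrArg (homogeneousComponent (q + (d - 1))) (mem_jacobianSyzygies.mp hρ)
  simpa [mem_jacobianSyzygies, homogeneousComponent_mul_of_isHomogeneous _ hf.pderiv] using hcomp

lemma isUnit_of_forall_dvd_of_minimal {f : MvPolynomial σ K} {d e : ℕ} (hf : f.IsHomogeneous d)
    {ρ : σ → MvPolynomial σ K} (hρ : ρ ∈ jacobianSyzygies f) (hρ0 : ρ ≠ 0)
    (hρe : ρ ∈ homogeneousVectors e)
    (hmin : ∀ q, ∀ θ ∈ jacobianSyzygies f, θ ≠ 0 → θ ∈ homogeneousVectors q → e ≤ q)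
    {b : MvPolynomial σ K} (hb : ∀ i, b ∣ ρ i) : IsUnit b := by
  choose θ hθ using hb
  obtain rfl : ρ = b • θ := funext hθ
  obtain ⟨hb0, hθ0⟩ := smul_ne_zero_iff.mp hρ0
  obtain ⟨i, hi⟩ : ∃ i, θ i ≠ 0 := Function.ne_iff.mp hθ0
  obtain ⟨q, hq, hqi⟩ : ∃ q ≤ (θ i).totalDegree, homogeneousComponent q (θ i) ≠ 0 := by
    rw [← sum_homogeneousComponent (θ i)] at hi
    obtain ⟨q, hq, hqi⟩ := Finset.exists_ne_zero_of_sum_ne_zero hi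
    exact ⟨q, Finset.mem_range_succ_iff.mp hq, hqi⟩
  have heq : e ≤ q :=
    hmin q _ (homogeneousComponent_mem_jacobianSyzygies hf
      (mem_jacobianSyzygies_of_smul_mem hb0 hρ) q) (fun h => hqi (congrFun h i))
      (mem_homogeneousVectors.mpr fun j => homogeneousComponent_isHomogeneous q (θ j))
  have hdeg : b.totalDegree + (θ i).totalDegree = e := by
    rw [← totalDegree_mul_of_isDomain hb0 hi]
    exact (mem_homogeneousVectors.mp hρe i).totalDegree (mul_ne_zero hb0 hi)
  exact isUnit_of_totalDegree_eq_zero hb0 (by lia)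

end Syzygies

section EulerMatrix

variable {R K : Type*} [CommRing R] [Field K] {n d : ℕ}

/-- The square matrix whose rows are the Euler vector field `(x₀, …, xₙ)` and the vectors `ρ i`. -/
def eulerMatrix (ρ : Fin n → Fin (n + 1) → MvPolynomial (Fin (n + 1)) R) :
    Matrix (Fin (n + 1)) (Fin (n + 1)) (MvPolynomial (Fin (n + 1)) R) :=
  of (vecCons X ρ)

lemma eulerMatrix_mulVec_pderiv {f : MvPolynomial (Fin (n + 1)) R} (hf : f.IsHomogeneous d)
    {ρ : Fin n → Fin (n + 1) → MvPolynomial (Fin (n + 1)) R}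
    (hρ : ∀ i, ρ i ∈ jacobianSyzygies f) :
    (eulerMatrix ρ *ᵥ fun j => pderiv j f) = Pi.single 0 (d • f) := by
  funext i
  cases i using Fin.cases with
  | zero => simpa [eulerMatrix, mulVec, dotProduct] using hf.sum_X_mul_pderiv
  | succ i => simpa [eulerMatrix, mulVec, dotProduct] using mem_jacobianSyzygies.mp (hρ i)

lemma det_eulerMatrix_isHomogeneous {ρ : Fin n → Fin (n + 1) → MvPolynomial (Fin (n + 1)) R}
    {e : Fin n → ℕ} (hρe : ∀ i, ρ i ∈ homogeneousVectors (e i)) :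
    (eulerMatrix ρ).det.IsHomogeneous (1 + ∑ i, e i) := by
  have hrows (i j) : (eulerMatrix ρ i j).IsHomogeneous (vecCons 1 e i) := by
    cases i using Fin.cases with
    | zero => exact isHomogeneous_X R j
    | succ i => exact mem_homogeneousVectors.mp (hρe i) j
  simpa [Fin.sum_univ_succ] using det_isHomogeneous hrows

lemma dvd_det_eulerMatrix [CharZero K] {f : MvPolynomial (Fin (n + 1)) K}
    (hf : f.IsHomogeneous d) (hred : Squarefree f)
    {ρ : Fin n → Fin (n + 1) → MvPolynomial (Fin (n + 1)) K}
    (hρ : ∀ i, ρ i ∈ jacobianSyzygies f) : f ∣ (eulerMatrix ρ).det := by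
  refine dvd_of_squarefree_of_forall_dvd_mul_pderiv hred fun j => ?_
  rw [det_mul_eq_adjugate_mul_of_mulVec_eq_single (eulerMatrix_mulVec_pderiv hf hρ) j]
  exact (dvd_smul_of_dvd d dvd_rfl).mul_left _

lemma det_submatrix_succAbove_eq_zero_of_sum_lt [CharZero K]
    {f : MvPolynomial (Fin (n + 1)) K} (hf : f.IsHomogeneous d) (hred : Squarefree f)
    {ρ : Fin n → Fin (n + 1) → MvPolynomial (Fin (n + 1)) K} {e : Fin n → ℕ}
    (hρ : ∀ i, ρ i ∈ jacobianSyzygies f) (hρe : ∀ i, ρ i ∈ homogeneousVectors (e i))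
    (hlt : 1 + ∑ i, e i < d) (j : Fin (n + 1)) :
    ((of ρ).submatrix id j.succAbove).det = 0 := by
  have hdet : (eulerMatrix ρ).det = 0 := by
    by_contra h0
    have hle := totalDegree_le_of_dvd_of_isDomain (dvd_det_eulerMatrix hf hred hρ) h0
    rw [hf.totalDegree hred.ne_zero, (det_eulerMatrix_isHomogeneous hρe).totalDegree h0] at hle
    exact hle.not_gt hlt
  have hadj : (eulerMatrix ρ).adjugate j 0 = 0 := by
    have hcramer :=
      det_mul_eq_adjugate_mul_of_mulVec_eq_single (eulerMatrix_mulVec_pderiv hf hρ) j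
    rw [hdet, zero_mul] at hcramer
    exact (mul_eq_zero.mp hcramer.symm).resolve_right
      (smul_ne_zero (Nat.ne_zero_of_lt hlt) hred.ne_zero)
  rw [adjugate_fin_succ_eq_det_submatrix] at hadj
  exact (mul_eq_zero.mp hadj).resolve_left (pow_ne_zero _ (neg_ne_zero.mpr one_ne_zero))

end EulerMatrix

section TameFamilies

variable {R K : Type*} [CommRing R] [Field K] [CharZero K] {n d k : ℕ}

/-- Tameness of a hypersurface in `n + 2` variables with respect to `n` syzygies: every homogeneous
syzygy `θ` for which the maximal minors of the matrix with rows `ρ i` and `θ` vanish is in the span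
of the `ρ i`. For `n = 2` this is `TamePair`. -/
def TameFamily (f : MvPolynomial (Fin (n + 2)) R)
    (ρ : Fin n → Fin (n + 2) → MvPolynomial (Fin (n + 2)) R) : Prop :=
  ∀ θ ∈ jacobianSyzygies f, ∀ q, θ ∈ homogeneousVectors q →
    (∀ j, ((of (Fin.snoc ρ θ : Fin (n + 1) → _)).submatrix id (Fin.succAbove j)).det = 0) →
    θ ∈ Submodule.span (MvPolynomial (Fin (n + 2)) R) (Set.range ρ)

lemma TameFamily.mem_span_of_degree_lt {f : MvPolynomial (Fin (n + 2)) K}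
    {ρ : Fin n → Fin (n + 2) → MvPolynomial (Fin (n + 2)) K} {e : Fin n → ℕ}
    (htame : TameFamily f ρ) (hf : f.IsHomogeneous d) (hred : Squarefree f)
    (hρ : ∀ i, ρ i ∈ jacobianSyzygies f) (hρe : ∀ i, ρ i ∈ homogeneousVectors (e i))
    (hk : 1 + ∑ i, e i + k < d) {θ : Fin (n + 2) → MvPolynomial (Fin (n + 2)) K}
    (hθ : θ ∈ jacobianSyzygies f) (hθk : θ ∈ homogeneousVectors k) :
    θ ∈ Submodule.span (MvPolynomial (Fin (n + 2)) K) (Set.range ρ) := by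
  refine htame θ hθ k hθk <| det_submatrix_succAbove_eq_zero_of_sum_lt hf hred
    (e := Fin.snoc e k) ?_ ?_ (by simpa [Fin.sum_univ_castSucc, add_assoc] using hk)
  · exact Fin.lastCases (by simpa using hθ) (by simpa using hρ)
  · exact Fin.lastCases (by simpa using hθk) (by simpa using hρe)

theorem low_degree_syzygies_general {f : MvPolynomial (Fin (n + 2)) K}
    {ρ : Fin n → Fin (n + 2) → MvPolynomial (Fin (n + 2)) K} {e : Fin n → ℕ}
    (hf : f.IsHomogeneous d) (hred : Squarefree f)
    (hρ : ∀ i, ρ i ∈ jacobianSyzygies f) (hρe : ∀ i, ρ i ∈ homogeneousVectors (e i))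
    (hli : LinearIndependent (MvPolynomial (Fin (n + 2)) K) ρ) (htame : TameFamily f ρ)
    (hk : 1 + ∑ i, e i + k < d) :
    (∀ θ ∈ jacobianSyzygies f, θ ∈ homogeneousVectors k →
      θ ∈ Submodule.span (MvPolynomial (Fin (n + 2)) K) (Set.range ρ)) ∧
    Module.finrank K ↥((jacobianSyzygies f).restrictScalars K ⊓ homogeneousVectors k) =
      ∑ i, if e i ≤ k then (n + 2).multichoose (k - e i) else 0 := by
  have hspan {θ} := htame.mem_span_of_degree_lt (θ := θ) hf hred hρ hρe hk
  have hle : Submodule.span (MvPolynomial (Fin (n + 2)) K) (Set.range ρ) ≤ jacobianSyzygies f :=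
    Submodule.span_le.mpr (Set.range_subset_iff.mpr hρ)
  have hgraded : (jacobianSyzygies f).restrictScalars K ⊓ homogeneousVectors k =
      (Submodule.span (MvPolynomial (Fin (n + 2)) K) (Set.range ρ)).restrictScalars K ⊓
        homogeneousVectors k :=
    Submodule.ext fun _ => and_congr_left fun hθk => ⟨fun hθ => hspan hθ hθk, fun hθ => hle hθ⟩
  refine ⟨fun θ => hspan, ?_⟩
  rw [hgraded, finrank_span_range_inf_homogeneousVectors hli hρe, Fintype.card_fin]

end TameFamilies

section Surfaces

variable {f : S4} {ρ1 ρ2 : Fin 4 → S4} {d e1 e2 k : ℕ}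

lemma mem_AR4_iff {θ : Fin 4 → S4} : θ ∈ AR4 f ↔ θ ∈ jacobianSyzygies f :=
  Iff.rfl

lemma vecHomog_iff {θ : Fin 4 → S4} : VecHomog θ k ↔ θ ∈ homogeneousVectors k :=
  mem_homogeneousVectors.symm

lemma binom3_eq (e k : ℕ) :
    binom3 ((k : ℤ) - e + 3) = if e ≤ k then Nat.multichoose 4 (k - e) else 0 := by
  rw [binom3]
  split_ifs with hek
  · rw [Nat.multichoose_eq, show ((k : ℤ) - e + 3).toNat = k - e + 3 by lia,
      show 4 + (k - e) - 1 = k - e + 3 by lia]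
    exact Nat.choose_symm_add.symm
  · exact Nat.choose_eq_zero_of_lt (by lia)

lemma MinimalPair.mem_jacobianSyzygies (hmin : MinimalPair f ρ1 ρ2 e1 e2) :
    ∀ i, ![ρ1, ρ2] i ∈ jacobianSyzygies f :=
  Fin.forall_fin_two.mpr ⟨mem_AR4_iff.mp hmin.1, mem_AR4_iff.mp hmin.2.2.2.2.1⟩

lemma MinimalPair.mem_homogeneousVectors (hmin : MinimalPair f ρ1 ρ2 e1 e2) :
    ∀ i, ![ρ1, ρ2] i ∈ homogeneousVectors (![e1, e2] i) :=
  Fin.forall_fin_two.mpr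
    ⟨vecHomog_iff.mp hmin.2.2.1, vecHomog_iff.mp hmin.2.2.2.2.2.1⟩

lemma MinimalPair.linearIndependent (hmin : MinimalPair f ρ1 ρ2 e1 e2)
    (hf : f.IsHomogeneous d) : LinearIndependent S4 ![ρ1, ρ2] := by
  obtain ⟨hρ1, hρ1_ne, hρ1e, hρ1_min, -, -, -, hρ2, -⟩ := hmin
  refine linearIndependent_pair_of_forall_dvd_isUnit (fun b hb => ?_) hρ2
  exact isUnit_of_forall_dvd_of_minimal hf (mem_AR4_iff.mp hρ1) hρ1_ne (vecHomog_iff.mp hρ1e)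
    (fun q θ hθ hθ0 hθq => hρ1_min θ (mem_AR4_iff.mpr hθ) q hθ0 (vecHomog_iff.mpr hθq)) hb

lemma TamePair.tameFamily (htame : TamePair f ρ1 ρ2) :
    TameFamily (n := 2) f ![ρ1, ρ2] := by
  intro θ hθ q hθq hminors
  have hrows : (Fin.snoc ![ρ1, ρ2] θ : Fin 3 → Fin 4 → S4) = ![ρ1, ρ2, θ] := by
    funext i
    fin_cases i <;> rfl
  rw [hrows] at hminors
  obtain ⟨a, b, rfl⟩ := htame θ (mem_AR4_iff.mpr hθ) q (vecHomog_iff.mpr hθq) hminors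
  rw [range_cons_cons_empty]
  exact Submodule.mem_span_pair.mpr ⟨a, b, rfl⟩

end Surfaces

/-- Every homogeneous syzygy of degree `k < e3` of a tame surface lies in `S·ρ1 + S·ρ2`;
consequently `ar(f)_k` is given by the expected binomial formula in that range. -/
theorem low_degree_syzygies (f : S4) (d e1 e2 e3 : ℕ) (ρ1 ρ2 : Fin 4 → S4)
    (hd : 1 ≤ d) (hf : f.IsHomogeneous d) (hred : Squarefree f)
    (hmin : MinimalPair f ρ1 ρ2 e1 e2) (htame : TamePair f ρ1 ρ2)
    (he3 : e1 + e2 + e3 + 1 = d) (he23 : e2 ≤ e3) :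
    (∀ ρ ∈ AR4 f, ∀ k : ℕ, k < e3 → VecHomog ρ k → ∃ a b : S4, ρ = a • ρ1 + b • ρ2) ∧
    (∀ k : ℕ, k < e3 →
      arDim f k = binom3 ((k : ℤ) - e1 + 3) + binom3 ((k : ℤ) - e2 + 3)) := by
  have general (k : ℕ) (hk : k < e3) :=
    low_degree_syzygies_general (n := 2) (e := ![e1, e2]) (k := k) hf hred
      hmin.mem_jacobianSyzygies hmin.mem_homogeneousVectors (hmin.linearIndependent hf)
      htame.tameFamily (by simp only [Fin.sum_univ_two, cons_val_zero, cons_val_one]; lia)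
  refine ⟨fun ρ hρ k hk hρk => ?_, fun k hk => ?_⟩
  · have hspan := (general k hk).1 ρ (mem_AR4_iff.mp hρ) (vecHomog_iff.mp hρk)
    rw [range_cons_cons_empty] at hspan
    obtain ⟨a, b, hab⟩ := Submodule.mem_span_pair.mp hspan
    exact ⟨a, b, hab.symm⟩
  · rw [binom3_eq, binom3_eq]
    exact (general k hk).2.trans (Fin.sum_univ_two _)
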